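/- arXiv:0712.3628 — 9 statements merged into one kernel-verified Lean document; each statement's English description precedes it below -/
import Mathlib

section
/- Let d_A > 2 and d_B > 2 be natural numbers such that d_A·d_B is even. Then there exists a linear subspace R of the space of d_A × d_B complex matrices with dim R = d_A·d_B/2 such that neither R nor its orthogonal complement (with respect to the Frobenius inner product) contains a nonzero matrix of rank at most 1. -/
open Matrix

/-- Parameters `X` whose graph subspace contains a nonzero product vector. -/
def BadSet {m n k : ℕ} (e : Fin m × Fin n ≃ Fin k ⊕ Fin k) : Set (Fin k → Fin k → ℂ) :=
  {X | ∃ (x : Fin m → ℂ) (y : Fin n → ℂ), (∃ a b, x a * y b ≠ 0) ∧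
    ∀ q, x (e.symm (Sum.inr q)).1 * y (e.symm (Sum.inr q)).2 =
      ∑ p, X q p * (x (e.symm (Sum.inl p)).1 * y (e.symm (Sum.inl p)).2)}

/-- Extend by the value one at the coordinate `a`. -/
def extOne {m : ℕ} (a : Fin m) (x : {i // i ≠ a} → ℂ) (i : Fin m) : ℂ :=
  if h : i = a then 1 else x ⟨i, h⟩

lemma contDiff_extOne {E : Type*} [NormedAddCommGroup E] [NormedSpace ℝ E]
    {m : ℕ} (a : Fin m) (f : E → ({i // i ≠ a} → ℂ))
    (hf : ContDiff ℝ 1 f) (i : Fin m) : ContDiff ℝ 1 (fun t => extOne a (f t) i) := by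
  unfold extOne
  split_ifs with h
  · exact contDiff_const
  · exact (contDiff_pi.1 hf) _

/-- The parametrization of the bad set. -/
def badMap {m n k : ℕ} (e : Fin m × Fin n ≃ Fin k ⊕ Fin k) (p₀ : Fin k) (a : Fin m) (b : Fin n)
    (t : ({i // i ≠ a} → ℂ) × ({j // j ≠ b} → ℂ) × (Fin k → {p // p ≠ p₀} → ℂ)) :
    Fin k → Fin k → ℂ := fun q p =>
  if h : p = p₀ then
    extOne a t.1 (e.symm (Sum.inr q)).1 * extOne b t.2.1 (e.symm (Sum.inr q)).2 -
      ∑ p' : {p // p ≠ p₀}, t.2.2 q p' *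
        (extOne a t.1 (e.symm (Sum.inl p'.1)).1 * extOne b t.2.1 (e.symm (Sum.inl p'.1)).2)
  else t.2.2 q ⟨p, h⟩

lemma contDiff_badMap {m n k : ℕ} (e : Fin m × Fin n ≃ Fin k ⊕ Fin k) (p₀ : Fin k)
    (a : Fin m) (b : Fin n) : ContDiff ℝ 1 (badMap e p₀ a b) := by
  have h1 : ∀ i, ContDiff ℝ 1 (fun t : ({i // i ≠ a} → ℂ) × ({j // j ≠ b} → ℂ) ×
      (Fin k → {p // p ≠ p₀} → ℂ) => extOne a t.1 i) :=
    contDiff_extOne a _ contDiff_fst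
  have h2 : ∀ i, ContDiff ℝ 1 (fun t : ({i // i ≠ a} → ℂ) × ({j // j ≠ b} → ℂ) ×
      (Fin k → {p // p ≠ p₀} → ℂ) => extOne b t.2.1 i) :=
    contDiff_extOne b _ contDiff_snd.fst
  have h3 : ∀ q p, ContDiff ℝ 1 (fun t : ({i // i ≠ a} → ℂ) × ({j // j ≠ b} → ℂ) ×
      (Fin k → {p // p ≠ p₀} → ℂ) => t.2.2 q p) := fun q p =>
    contDiff_pi.1 (contDiff_pi.1 contDiff_snd.snd q) p
  refine contDiff_pi.2 fun q => contDiff_pi.2 fun p => ?_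
  unfold badMap
  split_ifs with h
  · exact ((h1 _).mul (h2 _)).sub
      (ContDiff.sum fun p' _ => (h3 q p').mul ((h1 _).mul (h2 _)))
  · exact h3 _ _

lemma badSet_subset {m n k : ℕ} (e : Fin m × Fin n ≃ Fin k ⊕ Fin k) :
    BadSet e ⊆ ⋃ p₀ : Fin k, Set.range
      (badMap e p₀ (e.symm (Sum.inl p₀)).1 (e.symm (Sum.inl p₀)).2) := by
  rintro X ⟨x, y, ⟨a, b, hab⟩, hX⟩
  have hp : ∃ p, x (e.symm (Sum.inl p)).1 * y (e.symm (Sum.inl p)).2 ≠ 0 := by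
    by_contra! hcon
    have hq : ∀ q, x (e.symm (Sum.inr q)).1 * y (e.symm (Sum.inr q)).2 = 0 := by
      intro q; rw [hX q]; simp [hcon]
    apply hab
    rcases h : e (a, b) with p | q
    · have := hcon p; rw [← h] at this; simpa using this
    · have := hq q; rw [← h] at this; simpa using this
  obtain ⟨p₀, hp₀⟩ := hp
  refine Set.mem_iUnion.2 ⟨p₀, ?_⟩
  set a₀ := (e.symm (Sum.inl p₀)).1 with ha₀
  set b₀ := (e.symm (Sum.inl p₀)).2 with hb₀
  have hx : x a₀ ≠ 0 := left_ne_zero_of_mul hp₀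
  have hy : y b₀ ≠ 0 := right_ne_zero_of_mul hp₀
  have ex : ∀ i, extOne a₀ (fun i => x i.1 / x a₀) i = x i / x a₀ := by
    intro i; unfold extOne; split_ifs with h
    · subst h; field_simp
    · rfl
  have ey : ∀ i, extOne b₀ (fun i => y i.1 / y b₀) i = y i / y b₀ := by
    intro i; unfold extOne; split_ifs with h
    · subst h; field_simp
    · rfl
  refine ⟨(fun i => x i.1 / x a₀, fun j => y j.1 / y b₀, fun q p => X q p.1), ?_⟩
  funext q p
  unfold badMap
  split_ifs with h
  · subst h
    simp only [ex, ey]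
    have h1 := hX q
    rw [Fintype.sum_eq_add_sum_subtype_ne _ p] at h1
    rw [← ha₀, ← hb₀] at h1
    have h2 : ∑ p' : {p' // p' ≠ p}, X q p'.1 * (x (e.symm (Sum.inl p'.1)).1 / x a₀ *
        (y (e.symm (Sum.inl p'.1)).2 / y b₀)) =
        (∑ p' : {p' // p' ≠ p}, X q p'.1 * (x (e.symm (Sum.inl p'.1)).1 *
        (y (e.symm (Sum.inl p'.1)).2))) / (x a₀ * y b₀) := by
      rw [Finset.sum_div]
      refine Finset.sum_congr rfl fun p' _ => ?_
      field_simp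
    rw [h2, div_mul_div_comm, h1, ← sub_div, add_sub_cancel_right]
    field_simp
  · rfl

lemma dimH_badSet {m n k : ℕ} (hm : 2 < m) (hn : 2 < n) (hk : m * n = k + k)
    (e : Fin m × Fin n ≃ Fin k ⊕ Fin k) :
    dimH (BadSet e) < Module.finrank ℝ (Fin k → Fin k → ℂ) := by
  have hmk : m - 1 + (n - 1) < k := by
    obtain ⟨m, rfl⟩ := Nat.exists_eq_add_of_lt hm
    obtain ⟨n, rfl⟩ := Nat.exists_eq_add_of_lt hn
    have : 0 ≤ m * n := Nat.zero_le _
    have h2 : (2 + m + 1) * (2 + n + 1) = 9 + 3 * m + 3 * n + m * n := by ring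
    omega
  have hk0 : 0 < k := by omega
  have key : dimH (BadSet e) ≤ ((2 * (m - 1) + 2 * (n - 1) + 2 * (k * (k - 1)) : ℕ) : ENNReal) := by
    refine (dimH_mono (badSet_subset e)).trans ?_
    rw [dimH_iUnion]
    refine iSup_le fun p₀ => ?_
    refine (contDiff_badMap e p₀ _ _).dimH_range_le.trans ?_
    rw [Nat.cast_le]
    apply le_of_eq
    simp [Module.finrank_prod, Module.finrank_pi_fintype, Complex.finrank_real_complex]
    ring
  refine key.trans_lt ?_
  rw [Nat.cast_lt]
  simp only [Module.finrank_pi_fintype, Complex.finrank_real_complex, Finset.sum_const,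
    Finset.card_univ, Fintype.card_fin, smul_eq_mul]
  obtain ⟨k, rfl⟩ := Nat.exists_eq_succ_of_ne_zero hk0.ne'
  simp only [Nat.succ_eq_add_one, Nat.add_sub_cancel] at *
  nlinarith

lemma rank_one_form {m n : ℕ} (M : Matrix (Fin m) (Fin n) ℂ) (h0 : M ≠ 0) (hr : M.rank ≤ 1) :
    ∃ (x : Fin m → ℂ) (y : Fin n → ℂ), (∃ a b, x a * y b ≠ 0) ∧ ∀ i j, M i j = x i * y j := by
  unfold Matrix.rank at hr
  obtain ⟨v, hv⟩ := finrank_le_one_iff.1 hr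
  have : ∀ j, ∃ c : ℂ, ∀ i, M i j = v.1 i * c := by
    intro j
    obtain ⟨c, hc⟩ := hv ⟨M.mulVecLin (Pi.single j 1), LinearMap.mem_range_self _ _⟩
    refine ⟨c, fun i => ?_⟩
    have := congrFun (congrArg Subtype.val hc) i
    simp at this
    rw [← this, mul_comm]
  choose y hy using this
  refine ⟨v.1, y, ?_, fun i j => hy j i⟩
  by_contra! hcon
  apply h0
  ext i j
  rw [hy]; exact hcon i j

/-- Minus the conjugate transpose. -/
def negStar {k : ℕ} (Y : Fin k → Fin k → ℂ) : Fin k → Fin k → ℂ :=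
  fun q p => - star (Y p q)

lemma contDiff_negStar {k : ℕ} : LipschitzWith 1 (negStar (k := k)) := by
  refine LipschitzWith.of_dist_le_mul fun X Y => ?_
  rw [NNReal.coe_one, one_mul]
  refine (dist_pi_le_iff dist_nonneg).2 fun q => (dist_pi_le_iff dist_nonneg).2 fun p => ?_
  have h : dist (negStar X q p) (negStar Y q p) = dist (X p q) (Y p q) := by
    unfold negStar
    rw [dist_neg_neg, dist_star_star]
  rw [h]
  exact (dist_le_pi_dist (X p) (Y p) q).trans (dist_le_pi_dist X Y p)

/-- The graph subspace. -/
def graphSub {m n k : ℕ} (e : Fin m × Fin n ≃ Fin k ⊕ Fin k) (X : Fin k → Fin k → ℂ) :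
    Submodule ℂ (Matrix (Fin m) (Fin n) ℂ) where
  carrier := {M | ∀ q, M (e.symm (Sum.inr q)).1 (e.symm (Sum.inr q)).2 =
      ∑ p, X q p * M (e.symm (Sum.inl p)).1 (e.symm (Sum.inl p)).2}
  add_mem' := by
    intro M N hM hN q
    simp only [Matrix.add_apply, hM q, hN q, mul_add, Finset.sum_add_distrib]
  zero_mem' := by intro q; simp
  smul_mem' := by
    intro c M hM q
    simp only [Matrix.smul_apply, hM q, smul_eq_mul, Finset.mul_sum]
    exact Finset.sum_congr rfl fun p _ => by ring

/-- The element of the graph subspace over `u`. -/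
def graphEl {m n k : ℕ} (e : Fin m × Fin n ≃ Fin k ⊕ Fin k) (X : Fin k → Fin k → ℂ)
    (u : Fin k → ℂ) : Matrix (Fin m) (Fin n) ℂ :=
  fun i j => Sum.elim u (fun q => ∑ p, X q p * u p) (e (i, j))

lemma graphEl_mem {m n k : ℕ} (e : Fin m × Fin n ≃ Fin k ⊕ Fin k) (X : Fin k → Fin k → ℂ)
    (u : Fin k → ℂ) : graphEl e X u ∈ graphSub e X := by
  intro q
  simp [graphEl]

/-- Coordinates on the graph subspace. -/
def graphEquiv {m n k : ℕ} (e : Fin m × Fin n ≃ Fin k ⊕ Fin k) (X : Fin k → Fin k → ℂ) :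
    graphSub e X ≃ₗ[ℂ] (Fin k → ℂ) where
  toFun M p := M.1 (e.symm (Sum.inl p)).1 (e.symm (Sum.inl p)).2
  map_add' M N := rfl
  map_smul' c M := rfl
  invFun u := ⟨graphEl e X u, graphEl_mem e X u⟩
  left_inv := by
    rintro ⟨M, hM⟩
    apply Subtype.ext
    ext i j
    simp only [graphEl]
    rcases h : e (i, j) with p | q
    · simp only [Sum.elim_inl]
      rw [← h]; simp
    · have := hM q
      simp only [Sum.elim_inr]
      rw [← this, ← h]; simp
  right_inv := by
    intro u; funext p; simp [graphEl]

theorem stmt0 (dA dB : ℕ) (hA : 2 < dA) (hB : 2 < dB) (hEven : Even (dA * dB)) :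
    ∃ R : Submodule ℂ (Matrix (Fin dA) (Fin dB) ℂ),
      Module.finrank ℂ R = dA * dB / 2 ∧
      (∀ M ∈ R, M ≠ 0 → ¬ (M.rank ≤ 1)) ∧
      (∀ N : Matrix (Fin dA) (Fin dB) ℂ,
        (∀ M ∈ R, (Mᴴ * N).trace = 0) → N ≠ 0 → ¬ (N.rank ≤ 1)) := by
  obtain ⟨k, hk⟩ := hEven
  have e : Fin dA × Fin dB ≃ Fin k ⊕ Fin k := Fintype.equivOfCardEq (by simp [hk])
  let e' := e.trans (Equiv.sumComm _ _)
  have hdim : dimH (BadSet e ∪ negStar '' BadSet e') <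
      Module.finrank ℝ (Fin k → Fin k → ℂ) := by
    rw [dimH_union]
    exact max_lt (dimH_badSet hA hB hk e)
      ((contDiff_negStar.dimH_image_le _).trans_lt (dimH_badSet hA hB hk e'))
  obtain ⟨X, hX⟩ := (dense_compl_of_dimH_lt_finrank hdim).nonempty
  rw [Set.mem_compl_iff, Set.mem_union, not_or] at hX
  refine ⟨graphSub e X, ?_, ?_, ?_⟩
  · rw [(graphEquiv e X).finrank_eq]
    simp; omega
  · intro M hM h0 hr
    obtain ⟨x, y, hxy, hMxy⟩ := rank_one_form M h0 hr
    refine hX.1 ⟨x, y, hxy, fun q => ?_⟩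
    have := hM q
    simpa only [hMxy] using this
  · intro N hN h0 hr
    obtain ⟨x, y, hxy, hNxy⟩ := rank_one_form N h0 hr
    refine hX.2 ⟨negStar X, ⟨x, y, hxy, fun p => ?_⟩, ?_⟩
    · have h := hN _ (graphEl_mem e X (Pi.single p 1))
      have h2 : ((graphEl e X (Pi.single p 1))ᴴ * N).trace =
          ∑ s : Fin k ⊕ Fin k, star (graphEl e X (Pi.single p 1) (e.symm s).1 (e.symm s).2) *
            N (e.symm s).1 (e.symm s).2 := by
        rw [Equiv.sum_comp e.symm (fun ij => star (graphEl e X (Pi.single p 1) ij.1 ij.2) *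
            N ij.1 ij.2), Fintype.sum_prod_type_right]
        simp [Matrix.trace, Matrix.mul_apply]
      rw [h2, Fintype.sum_sum_type] at h
      simp [graphEl, hNxy, Pi.single_apply, apply_ite] at h
      simp [e', negStar]
      exact eq_neg_of_add_eq_zero_left h
    · funext q p
      simp [negStar]
end

section
/- Let d_A, d_B, d_E be natural numbers with d_A·d_B > d_A + d_B + d_E − 2, and fix a linear subspace V₀ of ℂ^{d_A·d_B} ≅ ℂ^{d_A} ⊗ ℂ^{d_B} with dim V₀ = d_E. With respect to the Haar probability measure on the unitary group U(d_A·d_B), the set of unitaries U such that the image subspace U(V₀) contains a nonzero product vector (i.e., a nonzero vector of the form a ⊗ b with a ∈ ℂ^{d_A}, b ∈ ℂ^{d_B}) has measure zero. -/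
open Matrix MeasureTheory

/-- The unitary group `U(n)` carries the Borel σ-algebra of its (subspace) topology. -/
noncomputable instance (n : Type*) [Fintype n] [DecidableEq n] :
    MeasurableSpace (Matrix.unitaryGroup n ℂ) := borel _

instance (n : Type*) [Fintype n] [DecidableEq n] :
    BorelSpace (Matrix.unitaryGroup n ℂ) := ⟨rfl⟩

theorem vol_haar (n : Type*) [Fintype n] :
    (volume : Measure (n → n → ℂ)).IsAddHaarMeasure := by
  haveI : ∀ _ : n, (volume : Measure (n → ℂ)).IsAddHaarMeasure := fun _ => inferInstance
  exact Measure.pi.isAddHaarMeasure (fun _ : n => (volume : Measure (n → ℂ)))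

theorem null_range {D E : Type*} [NormedAddCommGroup D] [NormedSpace ℝ D] [FiniteDimensional ℝ D]
    [NormedAddCommGroup E] [NormedSpace ℝ E] [FiniteDimensional ℝ E]
    [MeasurableSpace E] [BorelSpace E] (ν : Measure E) [ν.IsAddHaarMeasure]
    (f : D → E) (hf : ContDiff ℝ 1 f) (hd : Module.finrank ℝ D < Module.finrank ℝ E) :
    MeasurableSet (Set.range f) ∧ ν (Set.range f) = 0 := by
  constructor
  · have : ProperSpace D := FiniteDimensional.proper_real D
    obtain ⟨K, hK, hU⟩ := isSigmaCompact_range hf.continuous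
    rw [← hU]
    exact MeasurableSet.iUnion fun n => (hK n).measurableSet
  · have : ProperSpace E := FiniteDimensional.proper_real E
    have h1 : dimH (Set.range f) < ((Module.finrank ℝ E : NNReal) : ENNReal) :=
      lt_of_le_of_lt hf.dimH_range_le (by simpa using hd)
    refine Measure.absolutelyContinuous_isAddHaarMeasure ν
      (Measure.hausdorffMeasure (Module.finrank ℝ E)) ?_
    simpa using hausdorffMeasure_of_dimH_lt h1

/-- Slice of the bad set. -/
def sliceSet {dA dB : ℕ} (V : Submodule ℂ (Fin dA × Fin dB → ℂ)) (p : Fin dA × Fin dB)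
    (k : Fin dA) : Set (Fin dA × Fin dB → Fin dA × Fin dB → ℂ) :=
  {G | ∃ v ∈ V, v p = 1 ∧ ∃ (a : Fin dA → ℂ) (b : Fin dB → ℂ), a k = 1 ∧
    ∀ i, ∑ q, G i q * v q = a i.1 * b i.2}

/-- The bad set. -/
def badSet {dA dB : ℕ} (V : Submodule ℂ (Fin dA × Fin dB → ℂ)) :
    Set (Fin dA × Fin dB → Fin dA × Fin dB → ℂ) :=
  {G | ∃ v ∈ V, v ≠ 0 ∧ ∃ (a : Fin dA → ℂ) (b : Fin dB → ℂ),
    ∀ i, ∑ q, G i q * v q = a i.1 * b i.2}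

theorem slice_null {dA dB dE : ℕ} (h : dA + dB + dE - 2 < dA * dB)
    (V : Submodule ℂ (Fin dA × Fin dB → ℂ)) (hV : Module.finrank ℂ V = dE)
    (p : Fin dA × Fin dB) (k : Fin dA) :
    MeasurableSet (sliceSet V p k) ∧ volume (sliceSet V p k) = 0 := by
  by_cases hv : ∃ v ∈ V, v p = 1
  swap
  · have : sliceSet V p k = ∅ := by
      ext G
      simp only [sliceSet, Set.mem_ofPred_eq, Set.mem_empty_iff_false, iff_false]
      rintro ⟨v, h1, h2, -⟩
      exact hv ⟨v, h1, h2⟩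
    simp [this]
  obtain ⟨v0, hv0, hv0p⟩ := hv
  let K : Submodule ℂ (Fin dA × Fin dB → ℂ) := V ⊓ LinearMap.ker (LinearMap.proj p)
  let f : (({q // q ≠ p} → Fin dA × Fin dB → ℂ) × K × ({j // j ≠ k} → ℂ) × (Fin dB → ℂ)) →
      (Fin dA × Fin dB → Fin dA × Fin dB → ℂ) := fun x i q =>
    if hq : q ≠ p then x.1 ⟨q, hq⟩ i else
      (if hi : i.1 ≠ k then x.2.2.1 ⟨i.1, hi⟩ else 1) * x.2.2.2 i.2
        - ∑ r : {q // q ≠ p}, x.1 r i * (v0 r + (x.2.1 : Fin dA × Fin dB → ℂ) r)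
  have hK : ∀ r, ContDiff ℝ 1 (fun x : K => (x : Fin dA × Fin dB → ℂ) r) := by
    intro r
    have : ContDiff ℝ 1 (fun x : K => (x : Fin dA × Fin dB → ℂ)) :=
      ((K.subtypeL).restrictScalars ℝ).contDiff
    exact (contDiff_pi.1 this) r
  have hf : ContDiff ℝ 1 f := by
    refine contDiff_pi.2 fun i => contDiff_pi.2 fun q => ?_
    by_cases hq : q ≠ p
    · simp only [f, hq, dif_pos, ne_eq, not_false_eq_true]
      fun_prop
    · simp only [f, hq, dif_neg, not_false_eq_true]
      refine ContDiff.sub (ContDiff.mul ?_ ?_) (ContDiff.sum fun r _ => ContDiff.mul ?_ ?_)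
      · by_cases hi : i.1 ≠ k
        · simp only [hi, dif_pos, ne_eq, not_false_eq_true]
          fun_prop
        · simp only [hi, dif_neg, not_false_eq_true]
          fun_prop
      · fun_prop
      · fun_prop
      · exact contDiff_const.add ((hK r).comp (by fun_prop))
  have hsum : ∀ (g : Fin dA × Fin dB → ℂ), ∑ q, g q = g p + ∑ r : {q // q ≠ p}, g r := by
    intro g
    exact Fintype.sum_eq_add_sum_subtype_ne g p
  have hrange : sliceSet V p k = Set.range f := by
    ext G
    constructor
    · rintro ⟨v, hvV, hvp, a, b, hak, hG⟩
      refine ⟨(fun q i => G i q, ⟨v - v0, V.sub_mem hvV hv0, by simp [hvp, hv0p]⟩,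
        fun j => a j, b), ?_⟩
      funext i q
      by_cases hq : q = p
      · subst hq
        have h1 := hG i
        rw [hsum, hvp] at h1
        have h2 : (if hi : i.1 ≠ k then a i.1 else 1) = a i.1 := by
          split_ifs with hi
          · rfl
          · rw [not_not.1 hi, hak]
        simp only [f, ne_eq, not_true_eq_false, dite_false, Pi.sub_apply, add_sub_cancel]
        simp only [ne_eq] at h2 h1
        rw [h2, ← h1]
        ring
      · simp [f, hq]
    · rintro ⟨⟨G', w, a, b⟩, rfl⟩
      have hwp : (w : Fin dA × Fin dB → ℂ) p = 0 := by simpa using w.2.2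
      refine ⟨v0 + w, V.add_mem hv0 w.2.1, by simp [hv0p, hwp],
        fun j => if hi : j ≠ k then a ⟨j, hi⟩ else 1, b, by simp, fun i => ?_⟩
      rw [hsum]
      have : ∀ r : {q // q ≠ p}, f (G', w, a, b) i r = G' r i := by
        intro r
        simp [f, r.2]
      simp only [this]
      simp [f, hv0p, hwp]
  rw [hrange]
  have := vol_haar (Fin dA × Fin dB)
  refine null_range _ f hf ?_
  have hKlt : Module.finrank ℂ K < dE := by
    rw [← hV]
    refine Submodule.finrank_lt_finrank_of_lt (lt_of_le_of_ne inf_le_left fun hh => ?_)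
    have : v0 ∈ K := by rw [hh]; exact hv0
    have := this.2
    simp [hv0p] at this
  rw [finrank_real_of_complex, finrank_real_of_complex]
  simp only [Module.finrank_prod, Module.finrank_pi_fintype, Module.finrank_self, Finset.sum_const,
    Finset.card_univ, smul_eq_mul, mul_one, Fintype.card_prod, Fintype.card_fin,
    Fintype.card_subtype_compl, Fintype.card_subtype_eq, ne_eq]
  have hA : 0 < dA := k.pos
  have hN : 0 < dA * dB := Nat.mul_pos hA p.2.pos
  generalize hNN : dA * dB = N at *
  obtain ⟨M, rfl⟩ : ∃ M, N = M + 1 := ⟨N - 1, by omega⟩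
  have : (M + 1) * (M + 1) = M * (M + 1) + (M + 1) := by ring
  rw [this]
  simp only [Nat.add_sub_cancel]
  omega

theorem bad_null {dA dB dE : ℕ} (h : dA + dB + dE - 2 < dA * dB)
    (V : Submodule ℂ (Fin dA × Fin dB → ℂ)) (hV : Module.finrank ℂ V = dE) :
    MeasurableSet (badSet V) ∧ volume (badSet V) = 0 := by
  have : badSet V = ⋃ p, ⋃ k, sliceSet V p k := by
    ext G
    simp only [Set.mem_iUnion]
    constructor
    · rintro ⟨v, hv, hne, a, b, hG⟩
      obtain ⟨p, hp⟩ := Function.ne_iff.1 hne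
      simp only [Pi.zero_apply] at hp
      have hG' : ∀ i, ∑ q, G i q * (((v p)⁻¹ • v) q) = (v p)⁻¹ * (a i.1 * b i.2) := by
        intro i
        rw [← hG, Finset.mul_sum]
        refine Finset.sum_congr rfl fun q _ => ?_
        simp only [Pi.smul_apply, smul_eq_mul]
        ring
      have h1 : ((v p)⁻¹ • v) p = 1 := by simp [hp]
      by_cases ha : a = 0
      · refine ⟨p, p.1, (v p)⁻¹ • v, V.smul_mem _ hv, h1, fun _ => 1, 0, rfl, fun i => ?_⟩
        rw [hG', ha]
        simp
      · obtain ⟨k, hk⟩ := Function.ne_iff.1 ha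
        simp only [Pi.zero_apply] at hk
        refine ⟨p, k, (v p)⁻¹ • v, V.smul_mem _ hv, h1, fun j => (a k)⁻¹ * a j,
          fun j => (v p)⁻¹ * a k * b j, by simp [hk], fun i => ?_⟩
        rw [hG']
        field_simp
    · rintro ⟨p, k, v, hv, hvp, a, b, -, hG⟩
      refine ⟨v, hv, ?_, a, b, hG⟩
      rintro rfl
      simp at hvp
  rw [this]
  exact ⟨MeasurableSet.iUnion fun p => MeasurableSet.iUnion fun k => (slice_null h V hV p k).1,
    measure_iUnion_null fun p => measure_iUnion_null fun k => (slice_null h V hV p k).2⟩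

/-- Left multiplication by a fixed unitary, as a real linear equivalence. -/
theorem bad_null_mul {dA dB dE : ℕ} (h : dA + dB + dE - 2 < dA * dB)
    (V : Submodule ℂ (Fin dA × Fin dB → ℂ)) (hV : Module.finrank ℂ V = dE)
    (U : Matrix.unitaryGroup (Fin dA × Fin dB) ℂ) :
    volume {G : Fin dA × Fin dB → Fin dA × Fin dB → ℂ |
      (fun i j => ∑ r, U.1 i r * G r j) ∈ badSet V} = 0 := by
  let L : Matrix.unitaryGroup (Fin dA × Fin dB) ℂ →
      (Fin dA × Fin dB → Fin dA × Fin dB → ℂ) →ₗ[ℝ] (Fin dA × Fin dB → Fin dA × Fin dB → ℂ) :=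
    fun W =>
    { toFun := fun G i j => ∑ r, W.1 i r * G r j
      map_add' := by
        intro x y
        funext i j
        simp [mul_add, Finset.sum_add_distrib]
      map_smul' := by
        intro c x
        funext i j
        simp only [Pi.smul_apply, RingHom.id_apply, Finset.smul_sum, mul_smul_comm] }
  have hL : ∀ W G, L W G = W.1 * (Matrix.of G) := fun W G => rfl
  have hinv : L U⁻¹ ∘ₗ L U = LinearMap.id := by
    refine LinearMap.ext fun G => ?_
    change (U⁻¹).1 * (U.1 * (Matrix.of G)) = G
    rw [← Matrix.mul_assoc]
    have : (U⁻¹).1 * U.1 = 1 := congrArg Subtype.val (inv_mul_cancel U)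
    rw [this, Matrix.one_mul]
    rfl
  have hdet : LinearMap.det (L U) ≠ 0 := by
    intro h0
    have := congrArg LinearMap.det hinv
    rw [LinearMap.det_comp, h0] at this
    simp at this
  change volume ((L U) ⁻¹' badSet V) = 0
  have := vol_haar (Fin dA × Fin dB)
  rw [Measure.addHaar_preimage_linearMap _ hdet, (bad_null h V hV).2, mul_zero]

theorem exists_unitary {n : Type*} [Fintype n] [DecidableEq n] (V : Submodule ℂ (n → ℂ))
    (G : Matrix n n ℂ) (hG : G.det ≠ 0) :
    ∃ W : Matrix.unitaryGroup n ℂ, ∀ v ∈ V, ∃ v' ∈ V, W.1 *ᵥ v = G *ᵥ v' := by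
  let e : EuclideanSpace ℂ n ≃ₗ[ℂ] (n → ℂ) := WithLp.linearEquiv 2 ℂ (n → ℂ)
  let S : Submodule ℂ (EuclideanSpace ℂ n) := V.map e.symm.toLinearMap
  let T : Submodule ℂ (EuclideanSpace ℂ n) := (V.map G.mulVecLin).map e.symm.toLinearMap
  have hinj : Function.Injective G.mulVecLin := by
    have := Matrix.mulVec_injective_iff_isUnit.2
      ((Matrix.isUnit_iff_isUnit_det G).2 (isUnit_iff_ne_zero.2 hG))
    exact this
  have hfr : Module.finrank ℂ S = Module.finrank ℂ T := by
    have h1 : Module.finrank ℂ S = Module.finrank ℂ V := LinearEquiv.finrank_map_eq e.symm V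
    have h2 : Module.finrank ℂ T = Module.finrank ℂ (V.map G.mulVecLin) :=
      LinearEquiv.finrank_map_eq e.symm _
    rw [h1, h2]
    exact (Submodule.equivMapOfInjective _ hinj V).finrank_eq
  let g : S ≃ₗᵢ[ℂ] T := (stdOrthonormalBasis ℂ S).equiv (stdOrthonormalBasis ℂ T) (finCongr hfr)
  let L : S →ₗᵢ[ℂ] EuclideanSpace ℂ n := T.subtypeₗᵢ.comp g.toLinearIsometry
  let F : EuclideanSpace ℂ n ≃ₗᵢ[ℂ] EuclideanSpace ℂ n := L.extend.toLinearIsometryEquiv rfl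
  let b := EuclideanSpace.basisFun n ℂ
  refine ⟨⟨_, F.toMatrix_mem_unitaryGroup b b⟩, fun v hv => ?_⟩
  have key : (LinearMap.toMatrix b.toBasis b.toBasis F.toLinearMap) *ᵥ v = e (F (e.symm v)) := by
    have := LinearMap.toMatrix_mulVec_repr b.toBasis b.toBasis F.toLinearMap (e.symm v)
    exact this
  have hS : e.symm v ∈ S := ⟨v, hv, rfl⟩
  have hF : F (e.symm v) = (g ⟨e.symm v, hS⟩ : EuclideanSpace ℂ n) :=
    LinearIsometry.extend_apply L ⟨e.symm v, hS⟩
  obtain ⟨y, ⟨v', hv', rfl⟩, hy⟩ := (g ⟨e.symm v, hS⟩).2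
  refine ⟨v', hv', ?_⟩
  refine key.trans ?_
  rw [hF, ← hy]
  rfl

/-- for `d_A·d_B > d_A + d_B + d_E − 2` and a fixed `d_E`-dimensional subspace
`V₀` of `ℂ^{d_A} ⊗ ℂ^{d_B}`, with respect to the Haar probability measure on the unitary
group `U(d_A·d_B)` the set of unitaries `U` such that `U(V₀)` contains a nonzero product
vector `a ⊗ b` has measure zero. -/
theorem stmt1 (dA dB dE : ℕ) (h : dA + dB + dE - 2 < dA * dB)
    (V₀ : Submodule ℂ (Fin dA × Fin dB → ℂ)) (hV₀ : Module.finrank ℂ V₀ = dE)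
    (μ : Measure (Matrix.unitaryGroup (Fin dA × Fin dB) ℂ))
    [μ.IsHaarMeasure] [IsProbabilityMeasure μ] :
    μ {U : Matrix.unitaryGroup (Fin dA × Fin dB) ℂ |
        ∃ v ∈ V₀.map (Matrix.mulVecLin (U : Matrix (Fin dA × Fin dB) (Fin dA × Fin dB) ℂ)),
          v ≠ 0 ∧ ∃ (a : Fin dA → ℂ) (b : Fin dB → ℂ), v = fun p => a p.1 * b p.2} = 0 := by
  have : SecondCountableTopology (Matrix (Fin dA × Fin dB) (Fin dA × Fin dB) ℂ) :=
    inferInstanceAs (SecondCountableTopology (Fin dA × Fin dB → Fin dA × Fin dB → ℂ))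
  have : SecondCountableTopology (Matrix.unitaryGroup (Fin dA × Fin dB) ℂ) :=
    Topology.IsEmbedding.subtypeVal.secondCountableTopology
  -- joint measurability
  have hcont : Continuous (fun x : Matrix.unitaryGroup (Fin dA × Fin dB) ℂ ×
      (Fin dA × Fin dB → Fin dA × Fin dB → ℂ) =>
      (fun i j => ∑ r, x.1.1 i r * x.2 r j : Fin dA × Fin dB → Fin dA × Fin dB → ℂ)) := by
    refine continuous_pi fun i => continuous_pi fun j => continuous_finsetSum _ fun r _ => ?_
    refine Continuous.mul ?_ (by fun_prop)
    exact (continuous_subtype_val.comp continuous_fst).matrix_elem i r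
  have hmeas : MeasurableSet {x : Matrix.unitaryGroup (Fin dA × Fin dB) ℂ ×
      (Fin dA × Fin dB → Fin dA × Fin dB → ℂ) |
      (fun i j => ∑ r, x.1.1 i r * x.2 r j) ∉ badSet V₀} :=
    hcont.measurable (bad_null h V₀ hV₀).1.compl
  have h1 : ∀ᵐ U ∂μ, ∀ᵐ G ∂(volume : Measure (Fin dA × Fin dB → Fin dA × Fin dB → ℂ)),
      (fun i j => ∑ r, U.1 i r * G r j) ∉ badSet V₀ := by
    refine Filter.Eventually.of_forall fun U => ?_
    rw [ae_iff]
    simpa using bad_null_mul h V₀ hV₀ U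
  rw [Measure.ae_ae_comm (p := fun (U : Matrix.unitaryGroup (Fin dA × Fin dB) ℂ)
    (G : Fin dA × Fin dB → Fin dA × Fin dB → ℂ) =>
      (fun i j => ∑ r, U.1 i r * G r j) ∉ badSet V₀) hmeas] at h1
  -- pick an invertible good `G`
  have hopen : IsOpen {G : Fin dA × Fin dB → Fin dA × Fin dB → ℂ | (Matrix.of G).det ≠ 0} := by
    have : Continuous (fun G : Fin dA × Fin dB → Fin dA × Fin dB → ℂ => (Matrix.of G).det) :=
      Continuous.matrix_det continuous_id
    exact isOpen_ne_fun this continuous_const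
  have hne : {G : Fin dA × Fin dB → Fin dA × Fin dB → ℂ | (Matrix.of G).det ≠ 0}.Nonempty :=
    ⟨(1 : Matrix (Fin dA × Fin dB) (Fin dA × Fin dB) ℂ), by
      change (1 : Matrix (Fin dA × Fin dB) (Fin dA × Fin dB) ℂ).det ≠ 0
      simp⟩
  obtain ⟨G, hGdet, hG⟩ : ∃ G : Fin dA × Fin dB → Fin dA × Fin dB → ℂ, (Matrix.of G).det ≠ 0 ∧
      ∀ᵐ U ∂μ, (fun i j => ∑ r, U.1 i r * G r j) ∉ badSet V₀ := by
    have := vol_haar (Fin dA × Fin dB)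
    by_contra hcon
    push Not at hcon
    refine (hopen.measure_pos volume hne).ne' (measure_mono_null (fun G hG => ?_) h1)
    exact hcon G hG
  obtain ⟨W, hW⟩ := exists_unitary V₀ (Matrix.of G) hGdet
  rw [← measure_mul_right_null μ W]
  refine measure_mono_null ?_ hG
  rintro U ⟨v, ⟨x, hx, rfl⟩, hv, a, b, hab⟩
  obtain ⟨v', hv', hvv⟩ := hW x hx
  have hUW : (U * W).1 *ᵥ x = (U.1 * Matrix.of G) *ᵥ v' := by
    change (U.1 * W.1) *ᵥ x = _
    rw [← Matrix.mulVec_mulVec, hvv, Matrix.mulVec_mulVec]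
  simp only [Set.mem_compl_iff, Set.mem_ofPred_eq, not_not]
  refine ⟨v', hv', ?_, a, b, fun i => ?_⟩
  · rintro rfl
    apply hv
    rw [Matrix.mulVecLin_apply, hUW, Matrix.mulVec_zero]
  · have := congrFun hab i
    rw [Matrix.mulVecLin_apply, hUW] at this
    exact this
end

section
/- Let d_A, d_B, d_E be natural numbers with 1 ≤ d_E ≤ (d_A − 1)·(d_B − 1). Then there exists a linear subspace of the space of d_A × d_B complex matrices of dimension d_E that contains no nonzero matrix of rank at most 1. -/
open Matrix

/-- The polynomial `∑ M i j X^(i+j)` attached to a matrix, linearly. -/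
noncomputable def antidiagPoly (a b : ℕ) :
    Matrix (Fin a) (Fin b) ℂ →ₗ[ℂ] Polynomial ℂ where
  toFun M := ∑ i : Fin a, ∑ j : Fin b, Polynomial.monomial ((i : ℕ) + (j : ℕ)) (M i j)
  map_add' M N := by simp [Finset.sum_add_distrib]
  map_smul' c M := by simp [Finset.smul_sum, Polynomial.smul_monomial]

theorem antidiagPoly_mem (a b : ℕ) (M : Matrix (Fin a) (Fin b) ℂ) :
    antidiagPoly a b M ∈ Polynomial.degreeLT ℂ (a + b - 1) := by
  change ∑ i : Fin a, ∑ j : Fin b, Polynomial.monomial ((i : ℕ) + (j : ℕ)) (M i j) ∈ _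
  refine Submodule.sum_mem _ fun i _ => Submodule.sum_mem _ fun j _ => ?_
  rw [Polynomial.mem_degreeLT]
  refine lt_of_le_of_lt (Polynomial.degree_monomial_le _ _) ?_
  have hi := i.2
  have hj := j.2
  exact_mod_cast (by omega : (i : ℕ) + (j : ℕ) < a + b - 1)

theorem exists_factor_of_rank_le_one {a b : ℕ} (M : Matrix (Fin a) (Fin b) ℂ)
    (h : M.rank ≤ 1) : ∃ (u : Fin a → ℂ) (v : Fin b → ℂ), ∀ i j, M i j = u i * v j := by
  rw [Matrix.rank, finrank_le_one_iff] at h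
  obtain ⟨u, hu⟩ := h
  choose c hc using fun j : Fin b => hu ⟨M.mulVecLin (Pi.single j 1), LinearMap.mem_range_self _ _⟩
  refine ⟨u.1, c, fun i j => ?_⟩
  have := congrFun (congrArg Subtype.val (hc j)) i
  simp at this
  rw [mul_comm, this]

theorem poly_coeff_aux {a : ℕ} (u : Fin a → ℂ)
    (h : ∑ i : Fin a, Polynomial.monomial (i : ℕ) (u i) = 0) (i : Fin a) : u i = 0 := by
  have := congrArg (fun p => Polynomial.coeff p (i : ℕ)) h
  simpa [Polynomial.finsetSum_coeff, Polynomial.coeff_monomial, Fin.val_inj] using this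

theorem antidiagPoly_ker {a b : ℕ} (M : Matrix (Fin a) (Fin b) ℂ)
    (h : antidiagPoly a b M = 0) (hr : M.rank ≤ 1) : M = 0 := by
  obtain ⟨u, v, huv⟩ := exists_factor_of_rank_le_one M hr
  have key : (∑ i : Fin a, Polynomial.monomial (i : ℕ) (u i)) *
      (∑ j : Fin b, Polynomial.monomial (j : ℕ) (v j)) = 0 := by
    rw [← h]
    change _ = ∑ i : Fin a, ∑ j : Fin b, Polynomial.monomial ((i : ℕ) + (j : ℕ)) (M i j)
    simp [Finset.sum_mul_sum, Polynomial.monomial_mul_monomial, huv]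
  ext i j
  rw [huv]
  rcases mul_eq_zero.mp key with h | h
  · simp [poly_coeff_aux u h i]
  · simp [poly_coeff_aux v h j]

/-- If `1 ≤ d_E ≤ (d_A - 1)(d_B - 1)` then there is a subspace of the
`d_A × d_B` complex matrices of dimension `d_E` containing no nonzero matrix of rank
at most 1. -/
theorem stmt2 (dA dB dE : ℕ) (h1 : 1 ≤ dE) (h2 : dE ≤ (dA - 1) * (dB - 1)) :
    ∃ V : Submodule ℂ (Matrix (Fin dA) (Fin dB) ℂ),
      Module.finrank ℂ V = dE ∧
      ∀ M ∈ V, M ≠ 0 → ¬ (M.rank ≤ 1) := by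
  let L : Matrix (Fin dA) (Fin dB) ℂ →ₗ[ℂ] (Fin (dA + dB - 1) → ℂ) :=
    (Polynomial.degreeLTEquiv ℂ (dA + dB - 1)).toLinearMap ∘ₗ
      (antidiagPoly dA dB).codRestrict _ (antidiagPoly_mem dA dB)
  have hker : ∀ M ∈ LinearMap.ker L, antidiagPoly dA dB M = 0 := by
    intro M hM
    have h3 : (Polynomial.degreeLTEquiv ℂ (dA + dB - 1))
      ((antidiagPoly dA dB).codRestrict _ (antidiagPoly_mem dA dB) M) = 0 := hM
    rw [LinearEquiv.map_eq_zero_iff] at h3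
    exact congrArg Subtype.val h3
  have hdim : dE ≤ Module.finrank ℂ (LinearMap.ker L) := by
    have e1 := LinearMap.finrank_range_add_finrank_ker L
    have e2 := Submodule.finrank_le (LinearMap.range L)
    rw [Module.finrank_fin_fun] at e2
    rw [Module.finrank_matrix] at e1
    simp at e1
    rcases dA with _ | a
    · simp at h2; omega
    rcases dB with _ | b
    · simp at h2; omega
    simp only [Nat.add_sub_cancel] at h2
    have e3 : (a + 1) * (b + 1) = a * b + a + b + 1 := by ring
    omega
  obtain ⟨f, hf⟩ := exists_linearIndependent_of_le_finrank hdim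
  have hf' : LinearIndependent ℂ (fun i => (f i : Matrix (Fin dA) (Fin dB) ℂ)) :=
    hf.map' (LinearMap.ker L).subtype (Submodule.ker_subtype _)
  refine ⟨Submodule.span ℂ (Set.range fun i => (f i : Matrix (Fin dA) (Fin dB) ℂ)), ?_, ?_⟩
  · rw [finrank_span_eq_card hf', Fintype.card_fin]
  · intro M hM hne hr
    refine hne (antidiagPoly_ker M (hker M ?_) hr)
    refine (Submodule.span_le.mpr ?_) hM
    rintro _ ⟨i, rfl⟩
    exact (f i).2
end

section
/- Let ω = e^{2πi/3}. Define twelve 3 × 4 complex matrices: R₁ = [[0,0,0,0],[1,0,0,0],[0,1,0,0]], R₂ = [[1,0,0,0],[0,1,0,0],[0,0,1,0]], R₃ = [[1,0,0,0],[0,ω,0,0],[0,0,ω²,0]], R₄ = [[0,1,0,0],[0,0,ω²,0],[0,0,0,ω]], R₅ = [[0,0,1,0],[0,0,0,−1],[0,0,0,0]], R₆ = [[0,0,0,1],[0,0,0,0],[−1,0,0,0]], and S₁ = [[0,0,0,0],[1,0,0,0],[0,−1,0,0]], S₂ = [[1,0,0,0],[0,ω²,0,0],[0,0,ω,0]], S₃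 = [[0,1,0,0],[0,0,1,0],[0,0,0,1]], S₄ = [[0,1,0,0],[0,0,ω,0],[0,0,0,ω²]], S₅ = [[0,0,1,0],[0,0,0,1],[0,0,0,0]], S₆ = [[0,0,0,1],[0,0,0,0],[1,0,0,0]]. Let R = span{R₁,…,R₆} and S = span{S₁,…,S₆}. Then: (i) dim R = dim S = 6; (ii) R and S are orthogonal with respect to the Frobenius inner product; and (iii) neither R nor S contains a nonzero matrix of rank at most 1. -/
open Matrix

lemma aux_minor (M : Matrix (Fin 3) (Fin 4) ℂ) (h : M.rank ≤ 1) (i j : Fin 3) (k l : Fin 4) :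
    M i k * M j l - M i l * M j k = 0 := by
  by_contra hne
  have h1 : (M.submatrix ![i, j] ![k, l]).rank ≤ M.rank := by
    exact rank_submatrix_le _ _ _
  have h2 : (M.submatrix ![i, j] ![k, l]).rank = 2 := by
    rw [rank_of_isUnit]
    · simp
    · rw [isUnit_iff_isUnit_det, isUnit_iff_ne_zero, det_fin_two]
      simpa using hne
  omega

lemma aux_omega (ω : ℂ) (hω : ω = Complex.exp (2 * Real.pi * Complex.I / 3)) :
    ω ^ 2 + ω + 1 = 0 ∧ star ω = ω ^ 2 := by
  have hp : IsPrimitiveRoot ω 3 := by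
    rw [hω]; exact_mod_cast Complex.isPrimitiveRoot_exp 3 (by norm_num)
  have h1 : ω ^ 2 + ω + 1 = 0 := by
    have h3 := hp.pow_eq_one
    have hne : ω - 1 ≠ 0 := sub_ne_zero.2 (hp.ne_one (by norm_num))
    apply mul_left_cancel₀ hne
    linear_combination h3
  refine ⟨h1, ?_⟩
  have hn : ω * star ω = 1 := by
    have := hp.norm'_eq_one (by norm_num)
    rw [Complex.star_def, Complex.mul_conj, Complex.normSq_eq_norm_sq, this]; simp
  have h3 := hp.pow_eq_one
  linear_combination (ω ^ 2) * hn - star ω * h3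

lemma aux_w (ω : ℂ) (hw : ω ^ 2 + ω + 1 = 0) : ω ^ 3 = 1 ∧ ω ≠ 0 ∧
    ∀ x y : ℂ, (x + y) * (x + ω * y) = 0 → (x + y) * (x + ω ^ 2 * y) = 0 →
      (x + ω * y) * (x + ω ^ 2 * y) = 0 → x = 0 ∧ y = 0 := by
  have w3 : ω ^ 3 = 1 := by linear_combination (ω - 1) * hw
  have w0 : ω ≠ 0 := by rintro rfl; simp at hw
  have w1 : ω - 1 ≠ 0 := by
    intro h
    have : ω = 1 := by linear_combination h
    subst this; norm_num at hw
  have w2 : ω ^ 2 - 1 ≠ 0 := by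
    intro h
    apply w1
    linear_combination w3 - ω * h
  have fin : ∀ x y : ℂ, (x + y) * (x + ω * y) = 0 → (x + y) * (x + ω ^ 2 * y) = 0 →
      (x + ω * y) * (x + ω ^ 2 * y) = 0 → x = 0 ∧ y = 0 := by
    intro x y k1 k2 k3
    have hy : y = 0 := by
      rcases mul_eq_zero.1 k1 with h | h
      · rcases mul_eq_zero.1 k3 with h' | h'
        · have : (ω - 1) * y = 0 := by linear_combination h' - h
          simpa [w1] using this
        · have : (ω ^ 2 - 1) * y = 0 := by linear_combination h' - h
          simpa [w2] using this
      · rcases mul_eq_zero.1 k2 with h' | h'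
        · have : (ω - 1) * y = 0 := by linear_combination h - h'
          simpa [w1] using this
        · have : ω * ((ω - 1) * y) = 0 := by linear_combination h' - h
          simpa [w0, w1] using this
    subst hy
    simpa using k1
  exact ⟨w3, w0, fin⟩

lemma aux_rankR (ω a b c d e f : ℂ) (hw : ω ^ 2 + ω + 1 = 0)
    (h : (!![b + c, d, e, f; a, b + ω * c, ω ^ 2 * d, -e; -f, a, b + ω ^ 2 * c, ω * d] :
      Matrix (Fin 3) (Fin 4) ℂ).rank ≤ 1) :
    a = 0 ∧ b = 0 ∧ c = 0 ∧ d = 0 ∧ e = 0 ∧ f = 0 := by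
  have m := aux_minor _ h
  have m1 := m 0 1 2 3
  have m2 := m 0 2 0 3
  have m3 := m 1 2 0 1
  have m4 := m 0 1 1 2
  have m5 := m 1 2 2 3
  have m6 := m 0 2 1 2
  have m7 := m 0 1 0 1
  have m8 := m 0 2 0 2
  have m9 := m 1 2 1 2
  simp at m1 m2 m3 m4 m5 m6 m7 m8 m9
  clear m h
  obtain ⟨w3, w0, fin⟩ := aux_w ω hw
  have he : e = 0 := by
    by_contra he
    have hd : 2 * ω ^ 2 * d ^ 4 = 0 := by
      grind
    have hd : d = 0 := by simpa [w0] using hd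
    subst hd
    simp at m1
    exact he m1
  subst he
  have hd : d = 0 := by simpa [w0] using m4
  subst hd
  have hf : f = 0 := by simpa using m2
  subst hf
  have ha : a = 0 := by simpa using m3
  subst ha
  obtain ⟨rfl, rfl⟩ := fin b c (by simpa using m7) (by simpa using m8) (by simpa using m9)
  simp

lemma aux_rankS (ω a b c d e f : ℂ) (hw : ω ^ 2 + ω + 1 = 0)
    (h : (!![b, c + d, e, f; a, ω ^ 2 * b, c + ω * d, e; f, -a, ω * b, c + ω ^ 2 * d] :
      Matrix (Fin 3) (Fin 4) ℂ).rank ≤ 1) :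
    a = 0 ∧ b = 0 ∧ c = 0 ∧ d = 0 ∧ e = 0 ∧ f = 0 := by
  have m := aux_minor _ h
  have m1 := m 0 1 2 3
  have m2 := m 0 2 0 3
  have m3 := m 1 2 0 1
  have m4 := m 0 1 0 1
  have m5 := m 1 2 1 2
  have m6 := m 1 2 0 3
  have m7 := m 0 2 0 2
  have m8 := m 0 1 1 2
  have m9 := m 1 2 2 3
  have m10 := m 0 2 1 3
  simp at m1 m2 m3 m4 m5 m6 m7 m8 m9 m10
  clear m h
  obtain ⟨w3, w0, fin⟩ := aux_w ω hw
  have hb : b = 0 := by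
    have hb : 2 * ω * b ^ 2 = 0 := by
      grind
    simpa [w0] using hb
  subst hb
  have ha : a = 0 := by simpa using m3
  subst ha
  have hf : f = 0 := by simpa using m2
  subst hf
  have he : e = 0 := by simpa using m1
  subst he
  obtain ⟨rfl, rfl⟩ := fin c d (by simpa using m8) (by simpa using m10) (by simpa using m9)
  simp

lemma aux_R (ω : ℂ) (g : Fin 6 → ℂ) :
   ∑ i, g i • (![!![0,0,0,0; 1,0,0,0; 0,1,0,0],
       !![1,0,0,0; 0,1,0,0; 0,0,1,0],
       !![1,0,0,0; 0,ω,0,0; 0,0,ω^2,0],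
       !![0,1,0,0; 0,0,ω^2,0; 0,0,0,ω],
       !![0,0,1,0; 0,0,0,-1; 0,0,0,0],
       !![0,0,0,1; 0,0,0,0; -1,0,0,0]] : Fin 6 → Matrix (Fin 3) (Fin 4) ℂ) i = 
     !![g 1 + g 2, g 3, g 4, g 5; g 0, g 1 + ω * g 2, ω ^ 2 * g 3, -g 4; 
       -g 5, g 0, g 1 + ω ^ 2 * g 2, ω * g 3] := by
  ext i j
  fin_cases i <;> fin_cases j <;> simp [Fin.sum_univ_succ, Matrix.sum_apply] <;> ring

lemma aux_S (ω : ℂ) (g : Fin 6 → ℂ) :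
   ∑ i, g i • (![!![0,0,0,0; 1,0,0,0; 0,-1,0,0],
       !![1,0,0,0; 0,ω^2,0,0; 0,0,ω,0],
       !![0,1,0,0; 0,0,1,0; 0,0,0,1],
       !![0,1,0,0; 0,0,ω,0; 0,0,0,ω^2],
       !![0,0,1,0; 0,0,0,1; 0,0,0,0],
       !![0,0,0,1; 0,0,0,0; 1,0,0,0]] : Fin 6 → Matrix (Fin 3) (Fin 4) ℂ) i = 
     !![g 1, g 2 + g 3, g 4, g 5; g 0, ω ^ 2 * g 1, g 2 + ω * g 3, g 4; 
       g 5, -g 0, ω * g 1, g 2 + ω ^ 2 * g 3] := by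
  ext i j
  fin_cases i <;> fin_cases j <;> simp [Fin.sum_univ_succ, Matrix.sum_apply] <;> ring

lemma aux_range {α : Type*} (a b c d e f : α) :
    ({a, b, c, d, e, f} : Set α) = Set.range ![a, b, c, d, e, f] := by
  ext x
  simp [eq_comm]
  tauto

lemma aux_fin {p : Fin 6 → Prop} (h : p 0 ∧ p 1 ∧ p 2 ∧ p 3 ∧ p 4 ∧ p 5) (i : Fin 6) : p i := by
  obtain ⟨h0, h1, h2, h3, h4, h5⟩ := h
  fin_cases i <;> assumption

theorem stmt3 (ω : ℂ) (hω : ω = Complex.exp (2 * Real.pi * Complex.I / 3)) :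
    let R : Submodule ℂ (Matrix (Fin 3) (Fin 4) ℂ) := Submodule.span ℂ
      {!![0,0,0,0; 1,0,0,0; 0,1,0,0],
       !![1,0,0,0; 0,1,0,0; 0,0,1,0],
       !![1,0,0,0; 0,ω,0,0; 0,0,ω^2,0],
       !![0,1,0,0; 0,0,ω^2,0; 0,0,0,ω],
       !![0,0,1,0; 0,0,0,-1; 0,0,0,0],
       !![0,0,0,1; 0,0,0,0; -1,0,0,0]}
    let S : Submodule ℂ (Matrix (Fin 3) (Fin 4) ℂ) := Submodule.span ℂ
      {!![0,0,0,0; 1,0,0,0; 0,-1,0,0],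
       !![1,0,0,0; 0,ω^2,0,0; 0,0,ω,0],
       !![0,1,0,0; 0,0,1,0; 0,0,0,1],
       !![0,1,0,0; 0,0,ω,0; 0,0,0,ω^2],
       !![0,0,1,0; 0,0,0,1; 0,0,0,0],
       !![0,0,0,1; 0,0,0,0; 1,0,0,0]}
    Module.finrank ℂ R = 6 ∧ Module.finrank ℂ S = 6 ∧
    (∀ M ∈ R, ∀ N ∈ S, (Mᴴ * N).trace = 0) ∧
    (∀ M ∈ R, M ≠ 0 → ¬ (M.rank ≤ 1)) ∧
    (∀ N ∈ S, N ≠ 0 → ¬ (N.rank ≤ 1)) := by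
  intro R S
  obtain ⟨hw, hs⟩ := aux_omega ω hω
  have hR := aux_R ω
  have hS := aux_S ω
  subst R S
  refine ⟨?_, ?_, ?_, ?_, ?_⟩
  · rw [aux_range, finrank_span_eq_card]
    · simp
    · rw [Fintype.linearIndependent_iff]
      intro g hg
      rw [hR] at hg
      exact aux_fin (aux_rankR ω _ _ _ _ _ _ hw (by rw [hg]; simp))
  · rw [aux_range, finrank_span_eq_card]
    · simp
    · rw [Fintype.linearIndependent_iff]
      intro g hg
      rw [hS] at hg
      exact aux_fin (aux_rankS ω _ _ _ _ _ _ hw (by rw [hg]; simp))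
  · intro M hM N hN
    rw [aux_range, Submodule.mem_span_range_iff_exists_fun] at hM hN
    obtain ⟨g, rfl⟩ := hM
    obtain ⟨k, rfl⟩ := hN
    rw [hR, hS]
    rw [Complex.star_def] at hs
    simp [Matrix.trace, Fin.sum_univ_succ, Matrix.mul_apply, hs]
    generalize (starRingEnd ℂ) (g 1) = G1
    generalize (starRingEnd ℂ) (g 2) = G2
    generalize (starRingEnd ℂ) (g 3) = G3
    linear_combination (G1 * k 1 + (ω ^ 3 - ω + 1) * (G2 * k 1 + G3 * k 3)
      + (ω ^ 2 - ω + 1) * (G3 * k 2)) * hw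
  · intro M hM h0 hr
    rw [aux_range, Submodule.mem_span_range_iff_exists_fun] at hM
    obtain ⟨g, rfl⟩ := hM
    rw [hR] at hr h0
    obtain ⟨h1, h2, h3, h4, h5, h6⟩ := aux_rankR ω _ _ _ _ _ _ hw hr
    apply h0
    rw [h1, h2, h3, h4, h5, h6]
    ext i j
    fin_cases i <;> fin_cases j <;> simp
  · intro M hM h0 hr
    rw [aux_range, Submodule.mem_span_range_iff_exists_fun] at hM
    obtain ⟨g, rfl⟩ := hM
    rw [hS] at hr h0
    obtain ⟨h1, h2, h3, h4, h5, h6⟩ := aux_rankS ω _ _ _ _ _ _ hw hr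
    apply h0
    rw [h1, h2, h3, h4, h5, h6]
    ext i j
    fin_cases i <;> fin_cases j <;> simp
end

section
/- Let ω = e^{2πi/3} and let R be the span of the six 3 × 4 complex matrices R₁ = [[0,0,0,0],[1,0,0,0],[0,1,0,0]], R₂ = [[1,0,0,0],[0,1,0,0],[0,0,1,0]], R₃ = [[1,0,0,0],[0,ω,0,0],[0,0,ω²,0]], R₄ = [[0,1,0,0],[0,0,ω²,0],[0,0,0,ω]], R₅ = [[0,0,1,0],[0,0,0,−1],[0,0,0,0]], R₆ = [[0,0,0,1],[0,0,0,0],[−1,0,0,0]]. Then R contains no nonzero matrix of rank at most 1. -/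
open Matrix

lemma minor_eq (M : Matrix (Fin 3) (Fin 4) ℂ) (h : M.rank ≤ 1) (i j : Fin 3) (k l : Fin 4) :
    M i k * M j l = M i l * M j k := by
  by_contra hne
  have hdet : (M.submatrix ![i, j] ![k, l]).det ≠ 0 := by
    rw [Matrix.det_fin_two]
    simpa [sub_eq_zero] using hne
  have h2 := Matrix.rank_of_isUnit (M.submatrix ![i, j] ![k, l])
    ((Matrix.isUnit_iff_isUnit_det _).2 (isUnit_iff_ne_zero.2 hdet))
  have h3 := Matrix.rank_submatrix_le M ![i, j] ![k, l]
  rw [Fintype.card_fin] at h2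
  omega

lemma omega_rel (ω : ℂ) (hω : ω = Complex.exp (2 * Real.pi * Complex.I / 3)) :
    ω ^ 2 + ω + 1 = 0 := by
  have hp : IsPrimitiveRoot ω 3 := by
    rw [hω]
    exact_mod_cast Complex.isPrimitiveRoot_exp 3 (by norm_num)
  have h3 : ω ^ 3 = 1 := hp.pow_eq_one
  have h1 : ω ≠ 1 := hp.ne_one (by norm_num)
  have : (ω - 1) * (ω ^ 2 + ω + 1) = 0 := by linear_combination h3
  exact (mul_eq_zero.1 this).resolve_left (sub_ne_zero.2 h1)

/-- with `ω = e^{2πi/3}`, the span `R` of the six given `3 × 4` complex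
matrices contains no nonzero matrix of rank at most 1. -/
theorem stmt4 (ω : ℂ) (hω : ω = Complex.exp (2 * Real.pi * Complex.I / 3)) :
    ∀ M ∈ Submodule.span ℂ
      ({!![0,0,0,0; 1,0,0,0; 0,1,0,0],
        !![1,0,0,0; 0,1,0,0; 0,0,1,0],
        !![1,0,0,0; 0,ω,0,0; 0,0,ω^2,0],
        !![0,1,0,0; 0,0,ω^2,0; 0,0,0,ω],
        !![0,0,1,0; 0,0,0,-1; 0,0,0,0],
        !![0,0,0,1; 0,0,0,0; -1,0,0,0]} : Set (Matrix (Fin 3) (Fin 4) ℂ)),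
      M ≠ 0 → ¬ (M.rank ≤ 1) := by
  intro M hM hne hr
  apply hne
  have hw := omega_rel ω hω
  have hw0 : ω ≠ 0 := by rintro rfl; norm_num at hw
  have hm := minor_eq M hr
  simp only [Submodule.mem_span_insert, Submodule.mem_span_singleton] at hM
  obtain ⟨a, _, ⟨b, _, ⟨c, _, ⟨d, _, ⟨e, _, ⟨f, rfl⟩, rfl⟩, rfl⟩, rfl⟩, rfl⟩, rfl⟩ := hM
  have e1 := hm 0 1 0 1
  have e2 := hm 0 2 0 2
  have e3 := hm 1 2 1 2
  have e4 := hm 0 2 0 3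
  have e5 := hm 0 2 1 3
  have e6 := hm 0 1 2 3
  have e7 := hm 1 2 0 1
  have e8 := hm 0 1 0 2
  have e9 := hm 0 2 1 2
  have e10 := hm 1 2 1 3
  clear hm hr hne hω
  simp at e1 e2 e3 e4 e5 e6 e7 e8 e9 e10
  have key : a = 0 ∧ b = 0 ∧ c = 0 ∧ d = 0 ∧ e = 0 ∧ f = 0 := by
    by_cases hf : f = 0
    · subst hf
      have hd : d = 0 := by simpa [hw0] using e5
      subst hd
      have he : e = 0 := by simpa using e6
      have ha : a = 0 := by simpa using e7
      subst he ha
      have hbc : b ^ 2 = 0 ∧ c ^ 2 = 0 := by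
        constructor
        · linear_combination (e1 + e2 + e3 - (2 * b * c + ω * c ^ 2) * hw) / 3
        · linear_combination (ω ^ 2 * e1 + ω * e2 + e3
            - (b ^ 2 + 2 * ω * b * c + 3 * (ω - 1) * c ^ 2) * hw) / 3
      simp at hbc
      simp [hbc]
    · exfalso
      have hd : d ≠ 0 := by
        rintro rfl
        simp [hf] at e4
      have hp : b + c ≠ 0 := by
        intro h
        simp [h, hf] at e4
      have : d * (ω ^ 2 * (b + c)) = 0 := by
        grind
      simp [hd, hp, hw0] at this
  obtain ⟨rfl, rfl, rfl, rfl, rfl, rfl⟩ := key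
  simp
end

section
/- Let ω = e^{2πi/3} and let S be the span of the six 3 × 4 complex matrices S₁ = [[0,0,0,0],[1,0,0,0],[0,−1,0,0]], S₂ = [[1,0,0,0],[0,ω²,0,0],[0,0,ω,0]], S₃ = [[0,1,0,0],[0,0,1,0],[0,0,0,1]], S₄ = [[0,1,0,0],[0,0,ω,0],[0,0,0,ω²]], S₅ = [[0,0,1,0],[0,0,0,1],[0,0,0,0]], S₆ = [[0,0,0,1],[0,0,0,0],[1,0,0,0]]. Then S contains no nonzero matrix of rank at most 1. -/
open Matrix

/-- with `ω = e^{2πi/3}`, the span `S` of the six given `3 × 4` complex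
matrices contains no nonzero matrix of rank at most 1. -/
theorem stmt5 (ω : ℂ) (hω : ω = Complex.exp (2 * Real.pi * Complex.I / 3)) :
    ∀ M ∈ Submodule.span ℂ
      ({!![0,0,0,0; 1,0,0,0; 0,-1,0,0],
        !![1,0,0,0; 0,ω^2,0,0; 0,0,ω,0],
        !![0,1,0,0; 0,0,1,0; 0,0,0,1],
        !![0,1,0,0; 0,0,ω,0; 0,0,0,ω^2],
        !![0,0,1,0; 0,0,0,1; 0,0,0,0],
        !![0,0,0,1; 0,0,0,0; 1,0,0,0]} : Set (Matrix (Fin 3) (Fin 4) ℂ)),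
      M ≠ 0 → ¬ (M.rank ≤ 1) := by
  have hprim : IsPrimitiveRoot ω 3 := by
    rw [hω]
    exact_mod_cast Complex.isPrimitiveRoot_exp 3 (by norm_num)
  have hsum : 1 + ω + ω ^ 2 = 0 := by
    have := hprim.geom_sum_eq_zero (by norm_num)
    simpa [Finset.sum_range_succ] using this
  have hω0 : ω ≠ 0 := hprim.ne_zero (by norm_num)
  clear hprim hω
  intro M hM hne hr
  apply hne
  simp only [Submodule.mem_span_insert, Submodule.mem_span_singleton] at hM
  obtain ⟨a, _, ⟨b, _, ⟨c, _, ⟨d, _, ⟨e, _, ⟨f, rfl⟩, rfl⟩, rfl⟩, rfl⟩, rfl⟩, hM⟩ := hM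
  obtain ⟨p, hp⟩ : ∃ p, p = c + d := ⟨_, rfl⟩
  obtain ⟨q, hq⟩ : ∃ q, q = c + d * ω := ⟨_, rfl⟩
  obtain ⟨r, hr'⟩ : ∃ r, r = c + d * ω ^ 2 := ⟨_, rfl⟩
  have hlin : p + ω * q + ω ^ 2 * r = 0 := by
    rw [hp, hq, hr']
    linear_combination (c + d * (1 - ω + ω ^ 2)) * hsum
  have hM' : M = !![b, p, e, f; a, b * ω ^ 2, q, e; f, -a, b * ω, r] := by
    rw [hM, hp, hq, hr']
    ext i j
    fin_cases i <;> fin_cases j <;> simp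
  clear hM
  have m := minor_eq M hr
  subst hM'
  have e1 := m 0 1 0 2
  have e2 := m 0 2 1 2
  have e3 := m 1 2 1 3
  have e4 := m 1 2 1 2
  have e5 := m 1 2 0 1
  have e6 := m 0 2 0 3
  have e7 := m 0 1 2 3
  have e8 := m 0 1 1 2
  have e9 := m 0 2 1 3
  have e10 := m 1 2 2 3
  simp at e1 e2 e3 e4 e5 e6 e7 e8 e9 e10

  have hb : b = 0 := by
    by_contra hb
    have h1 : q = -(ω * p) := by
      apply mul_left_cancel₀ hb
      linear_combination e1 + e2
    have h2 : q = -(ω ^ 2 * r) := by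
      apply mul_left_cancel₀ hb
      linear_combination e1 + e3
    have hq0 : q = 0 := by
      have h3 : (2 * ω ^ 2) * q = 0 := by
        linear_combination ω * hlin - h1 - ω * h2 + q * hsum
      simpa [hω0] using h3
    have : b ^ 2 = 0 := by
      have h4 : ω ^ 3 * b ^ 2 = 0 := by
        linear_combination e4 - a * hq0
      simpa [hω0] using h4
    exact hb (by simpa using this)
  subst hb
  have ha : a = 0 := by
    have h : a ^ 2 = 0 := by linear_combination -e5
    simpa using h
  have hf : f = 0 := by
    have h : f ^ 2 = 0 := by linear_combination -e6
    simpa using h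
  have he : e = 0 := by
    have h : e ^ 2 = 0 := by linear_combination e7 + q * hf
    simpa using h
  subst ha hf he
  have f1 : p * q = 0 := by linear_combination e8
  have f2 : p * r = 0 := by linear_combination e9
  have f3 : q * r = 0 := by linear_combination e10
  have hp0 : p = 0 := by
    have h : p ^ 2 = 0 := by linear_combination p * hlin - ω * f1 - ω ^ 2 * f2
    simpa using h
  have hq0 : q = 0 := by
    have h : ω * q ^ 2 = 0 := by linear_combination q * hlin - f1 - ω ^ 2 * f3
    simpa [hω0] using h
  have hr0 : r = 0 := by
    have h : ω ^ 2 * r ^ 2 = 0 := by linear_combination r * hlin - f2 - ω * f3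
    simpa [hω0] using h
  rw [hp0, hq0, hr0]
  ext i j
  fin_cases i <;> fin_cases j <;> simp
end

section
/- Let ω = e^{2πi/3} and let R₀ be the span of the five 3 × 4 complex matrices R₁ = [[0,0,0,0],[1,0,0,0],[0,1,0,0]], R₂ = [[1,0,0,0],[0,1,0,0],[0,0,1,0]], R₃ = [[1,0,0,0],[0,ω,0,0],[0,0,ω²,0]], R₄ = [[0,1,0,0],[0,0,ω²,0],[0,0,0,ω]], R₅ = [[0,0,1,0],[0,0,0,−1],[0,0,0,0]]. Then R₀ contains no nonzero matrix of rank at most 1. -/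
open Matrix

/-- All `2 × 2` minors of a matrix of rank at most one vanish. -/
lemma minor_of_rank_le_one (M : Matrix (Fin 3) (Fin 4) ℂ) (h : M.rank ≤ 1)
    (i k : Fin 3) (j l : Fin 4) : M i j * M k l = M i l * M k j := by
  unfold Matrix.rank at h
  obtain ⟨v, hv⟩ := finrank_le_one_iff.mp h
  have key : ∀ j, ∃ c : ℂ, ∀ i, M i j = c * v.1 i := by
    intro j
    obtain ⟨c, hc⟩ := hv ⟨M.mulVecLin (Pi.single j 1), LinearMap.mem_range_self _ _⟩
    refine ⟨c, fun i => ?_⟩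
    have := congrFun (congrArg Subtype.val hc) i
    simpa using this.symm
  obtain ⟨c, hc⟩ := key j
  obtain ⟨d, hd⟩ := key l
  rw [hc, hd, hd, hc]
  ring

/-- with `ω = e^{2πi/3}`, the span `R₀` of the five given `3 × 4` complex
matrices contains no nonzero matrix of rank at most 1. -/
theorem stmt6 (ω : ℂ) (hω : ω = Complex.exp (2 * Real.pi * Complex.I / 3)) :
    ∀ M ∈ Submodule.span ℂ
      ({!![0,0,0,0; 1,0,0,0; 0,1,0,0],
        !![1,0,0,0; 0,1,0,0; 0,0,1,0],
        !![1,0,0,0; 0,ω,0,0; 0,0,ω^2,0],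
        !![0,1,0,0; 0,0,ω^2,0; 0,0,0,ω],
        !![0,0,1,0; 0,0,0,-1; 0,0,0,0]} : Set (Matrix (Fin 3) (Fin 4) ℂ)),
      M ≠ 0 → ¬ (M.rank ≤ 1) := by
  intro M hM hne hr
  have hprim : IsPrimitiveRoot ω 3 := by
    rw [hω]
    exact_mod_cast Complex.isPrimitiveRoot_exp 3 (by norm_num)
  have h0 : ω ≠ 0 := hprim.ne_zero (by norm_num)
  have h1 : ω - 1 ≠ 0 := sub_ne_zero.mpr (hprim.ne_one (by norm_num))
  have h2 : ω ^ 2 - 1 ≠ 0 :=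
    sub_ne_zero.mpr (hprim.pow_ne_one_of_pos_of_lt (by norm_num) (by norm_num))
  simp only [Submodule.mem_span_insert, Submodule.mem_span_singleton] at hM
  obtain ⟨a, _, ⟨b, _, ⟨c, _, ⟨d, _, ⟨e, rfl⟩, rfl⟩, rfl⟩, rfl⟩, rfl⟩ := hM
  have hm := minor_of_rank_le_one _ hr
  have he : e = 0 := by simpa using hm 0 1 2 3
  have ha : a = 0 := by simpa using hm 1 2 0 1
  subst he ha
  have hd : d = 0 := by simpa [h0] using hm 0 1 1 2
  subst hd
  have e1 : b + c = 0 ∨ b + c * ω = 0 := by simpa using hm 0 1 0 1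
  have e2 : b + c = 0 ∨ b + c * ω ^ 2 = 0 := by simpa using hm 0 2 0 2
  have e3 : b + c * ω = 0 ∨ b + c * ω ^ 2 = 0 := by simpa using hm 1 2 1 2
  have p1 : b + c = 0 → b + c * ω = 0 → c = 0 := fun x y =>
    (mul_eq_zero.mp (show c * (ω - 1) = 0 by linear_combination y - x)).resolve_right h1
  have p2 : b + c = 0 → b + c * ω ^ 2 = 0 → c = 0 := fun x y =>
    (mul_eq_zero.mp (show c * (ω ^ 2 - 1) = 0 by linear_combination y - x)).resolve_right h2
  have p3 : b + c * ω = 0 → b + c * ω ^ 2 = 0 → c = 0 := fun x y =>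
    (mul_eq_zero.mp (show c * (ω * (ω - 1)) = 0 by linear_combination y - x)).resolve_right
      (mul_ne_zero h0 h1)
  have hc : c = 0 := by tauto
  subst hc
  have hb : b = 0 := by simpa using e1
  subst hb
  exact hne (by simp)
end

section
/- Let ω = e^{2πi/3}. For all complex numbers α, β, γ, δ, ε, the 3 × 4 complex matrix M = [[β+γ, δ, ε, 1], [α, β+ωγ, ω²δ, −ε], [−1, α, β+ω²γ, ωδ]] has rank at least 2 (equivalently, M is not of rank at most 1, i.e., M does not correspond to a product vector). -/
open Matrix

lemma minor_zero_of_rank {m n : ℕ} (A : Matrix (Fin m) (Fin n) ℂ) (h : A.rank ≤ 1)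
    (i k : Fin m) (j l : Fin n) : A i j * A k l = A i l * A k j := by
  rw [Matrix.rank_eq_finrank_span_cols, finrank_le_one_iff] at h
  obtain ⟨v, hv⟩ := h
  have key : ∀ j, ∃ c : ℂ, ∀ i, A i j = c * v.1 i := by
    intro j
    obtain ⟨c, hc⟩ := hv ⟨A.col j, Submodule.subset_span ⟨j, rfl⟩⟩
    refine ⟨c, fun i => ?_⟩
    have := congrFun (congrArg Subtype.val hc) i
    simpa using this.symm
  obtain ⟨c, hc⟩ := key j
  obtain ⟨d, hd⟩ := key l
  rw [hc, hc, hd, hd]; ring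

/-- with `ω = e^{2πi/3}`, for all complex `α β γ δ ε` the matrix
`M = [[β+γ, δ, ε, 1], [α, β+ωγ, ω²δ, −ε], [−1, α, β+ω²γ, ωδ]]` has rank at least 2. -/
theorem stmt8 (ω : ℂ) (hω : ω = Complex.exp (2 * Real.pi * Complex.I / 3))
    (α β γ δ ε : ℂ) :
    2 ≤ (!![β + γ, δ, ε, 1;
            α, β + ω * γ, ω^2 * δ, -ε;
            -1, α, β + ω^2 * γ, ω * δ] : Matrix (Fin 3) (Fin 4) ℂ).rank := by
  have hp : IsPrimitiveRoot ω 3 := by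
    rw [hω]; exact_mod_cast Complex.isPrimitiveRoot_exp 3 (by norm_num)
  have h3 : ω ^ 3 = 1 := hp.pow_eq_one
  have h1 : ω ≠ 1 := hp.ne_one (by norm_num)
  have hs : 1 + ω + ω ^ 2 = 0 := by
    apply mul_left_cancel₀ (sub_ne_zero.2 h1)
    linear_combination h3
  have hω0 : ω ≠ 0 := hp.ne_zero (by norm_num)
  by_contra hlt
  have hm := minor_zero_of_rank _ (Nat.lt_succ_iff.1 (not_le.1 hlt))
  have a1 := hm 0 1 0 3
  have a2 := hm 0 1 1 3
  have a3 := hm 0 1 2 3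
  have b1 := hm 0 2 0 3
  have b2 := hm 0 2 1 3
  have b3 := hm 0 2 2 3
  clear hm
  simp at a1 a2 a3 b1 b2 b3
  have hδ : δ = -ω * ε ^ 2 := by
    linear_combination (-ω) * a3 - δ * h3
  subst hδ
  have hα : α = ε ^ 4 := by
    linear_combination (-1) * b2 + ε ^ 4 * h3
  subst hα
  have hε : ε ≠ 0 := by
    rintro rfl
    simp at b1
  have c1 : β + γ = -ε ^ 3 := by
    apply mul_left_cancel₀ hε
    linear_combination -a1
  have c2 : β + ω * γ = ω * ε ^ 3 := by linear_combination -a2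
  have c3 : β + ω ^ 2 * γ = -ω ^ 2 * ε ^ 3 := by linear_combination -b3
  have : 2 * ω ^ 2 * ε ^ 3 = 0 := by
    linear_combination (-1) * c1 - ω * c2 - ω ^ 2 * c3 + (β + ε ^ 3) * hs + γ * (1 - ω + ω ^ 2) * hs + ω * ε ^ 3 * h3
  simp [hω0, hε] at this
end

section
/- Let ω = e^{2πi/3}. For all complex numbers α, β, γ, δ, ε, the 3 × 4 complex matrix M′ = [[β, γ+δ, ε, 1], [α, ω²β, γ+ωδ, ε], [1, −α, ωβ, γ+ω²δ]] has rank at least 2 (equivalently, M′ is not of rank at most 1, i.e., M′ does not correspond to a product vector). -/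
open Matrix

lemma minor_zero_of_rank_lt (M : Matrix (Fin 3) (Fin 4) ℂ) (h : M.rank < 2)
    (i j : Fin 3) (k l : Fin 4) : M i k * M j l - M i l * M j k = 0 := by
  by_contra hne
  have hdet : (M.submatrix ![i, j] ![k, l]).det ≠ 0 := by
    rw [Matrix.det_fin_two]
    simpa using hne
  have hu : IsUnit (M.submatrix ![i, j] ![k, l]) :=
    (Matrix.isUnit_iff_isUnit_det _).2 (isUnit_iff_ne_zero.2 hdet)
  have h2 := Matrix.rank_of_isUnit _ hu
  have h3 : (M.submatrix ![i, j] ![k, l]).rank ≤ M.rank := Matrix.rank_submatrix_le _ _ _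
  rw [Fintype.card_fin] at h2
  omega

/-- with `ω = e^{2πi/3}`, for all complex `α β γ δ ε` the matrix
`M′ = [[β, γ+δ, ε, 1], [α, ω²β, γ+ωδ, ε], [1, −α, ωβ, γ+ω²δ]]` has rank at least 2. -/
theorem stmt9 (ω : ℂ) (hω : ω = Complex.exp (2 * Real.pi * Complex.I / 3))
    (α β γ δ ε : ℂ) :
    2 ≤ (!![β, γ + δ, ε, 1;
            α, ω^2 * β, γ + ω * δ, ε;
            1, -α, ω * β, γ + ω^2 * δ] : Matrix (Fin 3) (Fin 4) ℂ).rank := by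
  have hprim : IsPrimitiveRoot ω 3 := by
    rw [hω]
    exact_mod_cast Complex.isPrimitiveRoot_exp 3 (by norm_num)
  have h3 : ω ^ 3 = 1 := hprim.pow_eq_one
  have hs : 1 + ω + ω ^ 2 = 0 := by
    have h1 : ω - 1 ≠ 0 := sub_ne_zero.2 (hprim.ne_one (by norm_num))
    apply mul_left_cancel₀ h1
    linear_combination h3
  clear hprim hω
  by_contra hlt
  have hm := minor_zero_of_rank_lt _ (not_le.1 hlt)
  have a1 := hm 0 2 0 1
  have a2 := hm 0 2 0 2
  have a3 := hm 0 2 0 3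
  have b1 := hm 1 2 0 1
  have b2 := hm 1 2 0 2
  have b3 := hm 1 2 0 3
  clear hm hlt
  simp at a1 a2 a3 b1 b2 b3
  have hβ : β ≠ 0 := by
    rintro rfl
    simp at a3
  have hε : ε = ω * β ^ 2 := by linear_combination -a2
  -- `α = ω β³`
  have hα : α = ω * β ^ 3 := by
    linear_combination (-α) * a3 + β * b3 + β * hε
  have h5 : β ^ 5 = -1 := by
    have hω0 : ω ≠ 0 := by
      rintro rfl
      simp at h3
    apply mul_left_cancel₀ (mul_ne_zero (pow_ne_zero 2 hω0) hβ)
    rw [hα] at b1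
    linear_combination -b1
  -- the linear relation between the three diagonal entries
  have hrel : (γ + δ) + ω * (γ + ω * δ) + ω ^ 2 * (γ + ω ^ 2 * δ) = 0 := by
    linear_combination (γ + δ) * hs + ω * δ * h3
  have hA : γ + δ = -(α * β) := by linear_combination -a1
  have hB : γ + ω * δ = α * (ω * β) := by linear_combination -b2
  rw [hA, hB, hα] at hrel
  have h2 : (2 : ℂ) = 0 := by
    linear_combination -β * hrel + ω ^ 2 * a3 + (ω ^ 3 - ω) * h5 + hs - h3
  norm_num at h2
end
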